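/- Let n ≥ 1 and m ≤ n, let ψ ∈ H_A ⊗ H_B ⊗ H_R be a unit vector, let f : V → (ZMod 2)^m be a surjective linear map, and let 0 ≤ ε ≤ 1. Suppose there is a family of POVMs (Λ^c_z)_{z∈V} on H_B, one for each c ∈ (ZMod 2)^m, such that ∑_{z∈V} ⟨ψ| (|z⟩⟨z| ⊗ Λ^{f(z)}_z ⊗ 1_R) |ψ⟩ ≥ 1 − ε (i.e., the Z-measurement outcome z is ε-recoverable from B together with the compressed value f(z)). Then for every surjective linear map g : V → (ZMod 2)^{n−m} with ker g = range fᵀ, the hashed X-key of n−m bits is √(2ε)-secure against R: D(σ_g^{KR}, 2^{−(n−m)} 1_K ⊗ ψ^R) ≤ √(2ε). -/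

import Mathlib

open Matrix BigOperators Finset
open scoped Classical ComplexOrder

noncomputable section

/-- The positive semidefinite square root of a positive semidefinite matrix
(the former Mathlib definition). -/
def Matrix.PosSemidef.sqrt {ι : Type*} [Fintype ι] [DecidableEq ι] {M : Matrix ι ι ℂ}
    (hM : M.PosSemidef) : Matrix ι ι ℂ :=
  hM.1.eigenvectorUnitary.1 * Matrix.diagonal ((↑) ∘ Real.sqrt ∘ hM.1.eigenvalues) *
    (star hM.1.eigenvectorUnitary : Matrix ι ι ℂ)

/-- The positive semidefinite square root of a matrix (zero if the matrix is not PSD). -/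
def psdSqrt {ι : Type*} [Fintype ι] [DecidableEq ι] (M : Matrix ι ι ℂ) : Matrix ι ι ℂ :=
  if h : M.PosSemidef then h.sqrt else 0

/-- Trace norm ‖M‖₁ = Tr √(M†M). -/
def traceNorm {ι : Type*} [Fintype ι] [DecidableEq ι] (M : Matrix ι ι ℂ) : ℝ :=
  ((psdSqrt (Mᴴ * M)).trace).re

/-- Trace distance D(ρ,σ) = ‖ρ−σ‖₁/2. -/
def traceDist {ι : Type*} [Fintype ι] [DecidableEq ι] (ρ σ : Matrix ι ι ℂ) : ℝ :=
  traceNorm (ρ - σ) / 2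

/-- The adjoint fᵀ of a linear map f : (ZMod 2)^n → (ZMod 2)^m with respect to the
standard bilinear forms ⟨u,v⟩ = ∑ i, u i * v i, i.e. the map with ⟨fᵀc, v⟩ = ⟨c, f v⟩. -/
def adjLin {n m : ℕ}
    (f : ((Fin n → ZMod 2)) →ₗ[ZMod 2] (Fin m → ZMod 2)) :
    ((Fin m → ZMod 2)) →ₗ[ZMod 2] (Fin n → ZMod 2) :=
  Matrix.toLin' (LinearMap.toMatrix' f)ᵀ

/-- Conjugate (X) basis vector of n qubits: |x̃⟩_z = (−1)^{⟨x,z⟩} / 2^{n/2}. -/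
def xVecV (n : ℕ) (x z : Fin n → ZMod 2) : ℂ :=
  (-1 : ℂ) ^ ((∑ i, x i * z i : ZMod 2)).val / (Real.sqrt (2 ^ n) : ℂ)

/-- Component of (⟨x̃|⊗1_{BR})|ψ⟩. -/
def condVecXV {n : ℕ} {β r : Type*} [Fintype β] [Fintype r]
    (ψ : (Fin n → ZMod 2) × β × r → ℂ) (x : Fin n → ZMod 2) (p : β × r) : ℂ :=
  ∑ z, (starRingEnd ℂ) (xVecV n x z) * ψ (z, p.1, p.2)

/-- Unnormalized conditional state ϑ_x^R = Tr_B[(⟨x̃|⊗1)|ψ⟩⟨ψ|(|x̃⟩⊗1)]. -/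
def thetaRV {n : ℕ} {β r : Type*} [Fintype β] [Fintype r]
    (ψ : (Fin n → ZMod 2) × β × r → ℂ) (x : Fin n → ZMod 2) : Matrix r r ℂ :=
  Matrix.of fun s s' => ∑ b, condVecXV ψ x (b, s) * (starRingEnd ℂ) (condVecXV ψ x (b, s'))

/-- Reduced state ψ^R = Tr_{AB}|ψ⟩⟨ψ|. -/
def reducedR {α β r : Type*} [Fintype α] [Fintype β] [Fintype r]
    (ψ : α × β × r → ℂ) : Matrix r r ℂ :=
  Matrix.of fun s s' => ∑ z, ∑ b, ψ (z, b, s) * (starRingEnd ℂ) (ψ (z, b, s'))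

/-- The hashed X-key state σ_g^{KR} = ∑_k |k⟩⟨k| ⊗ ∑_{x : g x = k} ϑ_x^R. -/
def keyState {n ℓ : ℕ} {β r : Type*} [Fintype β] [Fintype r]
    (ψ : (Fin n → ZMod 2) × β × r → ℂ)
    (g : ((Fin n → ZMod 2)) →ₗ[ZMod 2] (Fin ℓ → ZMod 2)) :
    Matrix ((Fin ℓ → ZMod 2) × r) ((Fin ℓ → ZMod 2) × r) ℂ :=
  Matrix.of fun p q =>
    if p.1 = q.1 then ∑ x ∈ Finset.univ.filter (fun x => g x = p.1), thetaRV ψ x p.2 q.2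
    else 0

/-- The ideal key state 2^{−ℓ} 1_K ⊗ ψ^R on ℓ key bits. -/
def idealKeyV (ℓ : ℕ) {n : ℕ} {β r : Type*} [Fintype β] [Fintype r]
    (ψ : (Fin n → ZMod 2) × β × r → ℂ) :
    Matrix ((Fin ℓ → ZMod 2) × r) ((Fin ℓ → ZMod 2) × r) ℂ :=
  Matrix.of fun p q => (if p.1 = q.1 then ((2 : ℂ) ^ ℓ)⁻¹ else 0) * reducedR ψ p.2 q.2

end

/-- The squared Hilbert–Schmidt norm is the trace of `A * Aᴴ`. -/
lemma re_trace_mul_conjTranspose_self {ι κ : Type*} [Fintype ι] [Fintype κ]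
    (A : Matrix ι κ ℂ) : (A * Aᴴ).trace.re = ∑ i, ∑ j, ‖A i j‖ ^ 2 := by
  simp only [Matrix.trace, Matrix.diag, Matrix.mul_apply, Matrix.conjTranspose_apply,
    Complex.re_sum]
  refine Finset.sum_congr rfl fun i _ => Finset.sum_congr rfl fun j _ => ?_
  rw [← starRingEnd_apply, Complex.mul_conj, Complex.ofReal_re, Complex.normSq_eq_norm_sq]

/-- Cauchy–Schwarz for the Hilbert–Schmidt inner product. -/
lemma re_trace_mul_conjTranspose_le {ι κ : Type*} [Fintype ι] [Fintype κ]
    (A B : Matrix ι κ ℂ) :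
    (A * Bᴴ).trace.re ≤ √(A * Aᴴ).trace.re * √(B * Bᴴ).trace.re := by
  rw [re_trace_mul_conjTranspose_self, re_trace_mul_conjTranspose_self,
    ← Fintype.sum_prod_type' fun i j => ‖A i j‖ ^ 2,
    ← Fintype.sum_prod_type' fun i j => ‖B i j‖ ^ 2]
  refine le_trans ?_ (Real.sum_mul_le_sqrt_mul_sqrt _ _ _)
  simp only [Matrix.trace, Matrix.diag, Matrix.mul_apply, Matrix.conjTranspose_apply,
    Complex.re_sum, Fintype.sum_prod_type]
  refine Finset.sum_le_sum fun i _ => Finset.sum_le_sum fun j _ => ?_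
  refine (Complex.re_le_norm _).trans ?_
  rw [norm_mul, norm_star]

/-- Polar decomposition, in the form of duality between trace norm and operator norm. -/
lemma exists_contraction_traceNorm_eq {ι : Type*} [Fintype ι] [DecidableEq ι]
    (M : Matrix ι ι ℂ) :
    ∃ S : Matrix ι ι ℂ, (1 - S * Sᴴ).PosSemidef ∧ traceNorm M = (S * M).trace.re := by
  have hN : (Mᴴ * M).PosSemidef := Matrix.posSemidef_conjTranspose_mul_self M
  set U : Matrix ι ι ℂ := hN.1.eigenvectorUnitary.1
  set d := hN.1.eigenvalues
  have hd0 : ∀ i, 0 ≤ d i := hN.eigenvalues_nonneg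
  have hUU : Uᴴ * U = 1 := Unitary.coe_star_mul_self hN.1.eigenvectorUnitary
  have hUU' : U * Uᴴ = 1 := Unitary.coe_mul_star_self hN.1.eigenvectorUnitary
  have hspec : Mᴴ * M = U * diagonal (fun i => (d i : ℂ)) * Uᴴ := by
    have := hN.1.spectral_theorem
    rw [Unitary.conjStarAlgAut_apply] at this
    exact this
  set E : Matrix ι ι ℂ := diagonal fun i => (((√(d i))⁻¹ : ℝ) : ℂ) with hE
  have hEH : Eᴴ = E := by
    rw [hE, diagonal_conjTranspose]
    congr 1
    ext i
    simp
  have hmul : ∀ A B : Matrix ι ι ℂ, U * A * Uᴴ * (U * B * Uᴴ) = U * (A * B) * Uᴴ := by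
    intro A B
    calc _ = U * A * (Uᴴ * U) * B * Uᴴ := by simp only [Matrix.mul_assoc]
      _ = _ := by rw [hUU, Matrix.mul_one]; simp only [Matrix.mul_assoc]
  refine ⟨U * E * Uᴴ * Mᴴ, ?_, ?_⟩
  · have h1 : U * E * Uᴴ * Mᴴ * (U * E * Uᴴ * Mᴴ)ᴴ
        = U * diagonal (fun i => if d i = 0 then (0 : ℂ) else 1) * Uᴴ := by
      calc _ = U * E * Uᴴ * (Mᴴ * M) * (U * E * Uᴴ) := by
            simp only [conjTranspose_mul, conjTranspose_conjTranspose, hEH, Matrix.mul_assoc]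
        _ = _ := by
            rw [hspec, hmul, hmul, hE, diagonal_mul_diagonal, diagonal_mul_diagonal]
            congr 3
            ext i
            split_ifs with h
            · simp [h]
            · have : √(d i) ≠ 0 := by
                rw [Real.sqrt_ne_zero (hd0 i)]; exact h
              have h2 : (√(d i))⁻¹ * d i * (√(d i))⁻¹ = 1 := by
                nth_rewrite 2 [← Real.mul_self_sqrt (hd0 i)]
                field_simp
              exact_mod_cast h2
    have h2 : (1 : Matrix ι ι ℂ) - U * diagonal (fun i => if d i = 0 then (0 : ℂ) else 1) * Uᴴ
        = U * diagonal (fun i => if d i = 0 then (1 : ℂ) else 0) * Uᴴ := by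
      have : (diagonal (fun i => if d i = 0 then (1 : ℂ) else 0) : Matrix ι ι ℂ)
          = 1 - diagonal (fun i => if d i = 0 then (0 : ℂ) else 1) := by
        rw [← diagonal_one, diagonal_sub]
        congr 1
        ext i
        split_ifs <;> simp
      rw [this, Matrix.mul_sub, Matrix.sub_mul, Matrix.mul_one, hUU']
    rw [h1, h2]
    refine Matrix.PosSemidef.mul_mul_conjTranspose_same (posSemidef_diagonal_iff.2 fun i => ?_) U
    split_ifs <;> simp
  · have h3 : U * E * Uᴴ * Mᴴ * M = psdSqrt (Mᴴ * M) := by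
      rw [psdSqrt, dif_pos hN]
      change _ = U * diagonal (fun i => ((√(d i) : ℝ) : ℂ)) * Uᴴ
      rw [Matrix.mul_assoc, hspec, hmul, hE, diagonal_mul_diagonal]
      congr 3
      ext i
      have : (√(d i))⁻¹ * d i = √(d i) := by
        by_cases h : √(d i) = 0
        · rw [h, (Real.sqrt_eq_zero (hd0 i)).1 h]; simp
        · nth_rewrite 2 [← Real.mul_self_sqrt (hd0 i)]
          field_simp
      exact_mod_cast this
    rw [h3, traceNorm]

/-- A contraction does not increase the Hilbert–Schmidt norm. -/
lemma re_trace_contraction_le {ι κ : Type*} [Fintype ι] [DecidableEq ι] [Fintype κ]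
    {S : Matrix ι ι ℂ} (hS : (1 - S * Sᴴ).PosSemidef) (H : Matrix ι κ ℂ) :
    ((Sᴴ * H) * (Sᴴ * H)ᴴ).trace.re ≤ (H * Hᴴ).trace.re := by
  have h := (hS.conjTranspose_mul_mul_same H).trace_nonneg
  have hre := (Complex.le_def.1 h).1
  rw [Matrix.mul_sub, Matrix.sub_mul, trace_sub, Complex.sub_re, Matrix.mul_one,
    trace_mul_comm Hᴴ H] at hre
  have : (Sᴴ * H * (Sᴴ * H)ᴴ).trace = (Hᴴ * (S * Sᴴ) * H).trace := by
    rw [trace_mul_comm]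
    simp only [conjTranspose_mul, conjTranspose_conjTranspose, Matrix.mul_assoc]
  rw [this]
  simpa using hre

/-- Two mixed states are at least as close in trace norm as their purifications. -/
lemma traceNorm_mul_conjTranspose_sub_le {ι κ : Type*} [Fintype ι] [DecidableEq ι] [Fintype κ]
    (X Y : Matrix ι κ ℂ) :
    traceNorm (X * Xᴴ - Y * Yᴴ) ≤
      (√(X * Xᴴ).trace.re + √(Y * Yᴴ).trace.re) * √((X - Y) * (X - Y)ᴴ).trace.re := by
  obtain ⟨S, hS, hM⟩ := exists_contraction_traceNorm_eq (X * Xᴴ - Y * Yᴴ)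
  have key : ∀ G H : Matrix ι κ ℂ, (S * (G * Hᴴ)).trace.re
      ≤ √(G * Gᴴ).trace.re * √(H * Hᴴ).trace.re := by
    intro G H
    have : (S * (G * Hᴴ)).trace = (G * (Sᴴ * H)ᴴ).trace := by
      rw [trace_mul_comm, conjTranspose_mul, conjTranspose_conjTranspose, Matrix.mul_assoc]
    rw [this]
    refine (re_trace_mul_conjTranspose_le _ _).trans ?_
    exact mul_le_mul_of_nonneg_left (Real.sqrt_le_sqrt (re_trace_contraction_le hS H))
      (Real.sqrt_nonneg _)
  have hsplit : X * Xᴴ - Y * Yᴴ = (X - Y) * Xᴴ + Y * (X - Y)ᴴ := by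
    rw [conjTranspose_sub, Matrix.sub_mul, Matrix.mul_sub]
    abel
  rw [hM, hsplit, Matrix.mul_add, trace_add, Complex.add_re]
  have h1 := key (X - Y) X
  have h2 := key Y (X - Y)
  linarith

/-- An effect `0 ≤ M ≤ 1` has a Hermitian square root dominating it. -/
lemma exists_sqrt_ge {ι : Type*} [Fintype ι] [DecidableEq ι] {M : Matrix ι ι ℂ}
    (hM : M.PosSemidef) (hM1 : (1 - M).PosSemidef) :
    ∃ S : Matrix ι ι ℂ, Sᴴ * S = M ∧ (S - M).PosSemidef := by
  set U : Matrix ι ι ℂ := hM.1.eigenvectorUnitary.1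
  set d := hM.1.eigenvalues
  have hd0 : ∀ i, 0 ≤ d i := hM.eigenvalues_nonneg
  have hUU : Uᴴ * U = 1 := Unitary.coe_star_mul_self hM.1.eigenvectorUnitary
  have hspec : M = U * diagonal (fun i => (d i : ℂ)) * Uᴴ := by
    have := hM.1.spectral_theorem
    rw [Unitary.conjStarAlgAut_apply] at this
    exact this
  have hd1 : ∀ i, d i ≤ 1 := by
    have h := hM1.conjTranspose_mul_mul_same U
    have h' : Uᴴ * (1 - M) * U = diagonal fun i => ((1 - d i : ℝ) : ℂ) := by
      calc _ = Uᴴ * U - (Uᴴ * U) * diagonal (fun i => (d i : ℂ)) * (Uᴴ * U) := by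
            rw [Matrix.mul_sub, Matrix.sub_mul, Matrix.mul_one]
            nth_rewrite 1 [hspec]
            simp only [Matrix.mul_assoc]
        _ = _ := by
            rw [hUU, Matrix.mul_one, Matrix.one_mul, ← diagonal_one, diagonal_sub]
            congr 1
            ext i
            simp
    rw [h', posSemidef_diagonal_iff] at h
    intro i
    have := h i
    rw [Complex.zero_le_real] at this
    linarith
  refine ⟨U * diagonal (fun i => ((√(d i) : ℝ) : ℂ)) * Uᴴ, ?_, ?_⟩
  · have hH : (diagonal (fun i => ((√(d i) : ℝ) : ℂ)))ᴴ
        = (diagonal (fun i => ((√(d i) : ℝ) : ℂ)) : Matrix ι ι ℂ) := by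
      rw [diagonal_conjTranspose]
      congr 1
      ext i
      simp
    rw [conjTranspose_mul, conjTranspose_mul, conjTranspose_conjTranspose, hH]
    calc _ = U * diagonal (fun i => ((√(d i) : ℝ) : ℂ)) * (Uᴴ * U)
          * diagonal (fun i => ((√(d i) : ℝ) : ℂ)) * Uᴴ := by simp only [Matrix.mul_assoc]
      _ = U * (diagonal (fun i => ((√(d i) : ℝ) : ℂ))
          * diagonal (fun i => ((√(d i) : ℝ) : ℂ))) * Uᴴ := by
          rw [hUU, Matrix.mul_one]; simp only [Matrix.mul_assoc]
      _ = M := by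
          rw [diagonal_mul_diagonal]
          conv_rhs => rw [hspec]
          congr 3
          ext i
          exact_mod_cast Real.mul_self_sqrt (hd0 i)
  · have : U * diagonal (fun i => ((√(d i) : ℝ) : ℂ)) * Uᴴ - M
        = U * diagonal (fun i => ((√(d i) - d i : ℝ) : ℂ)) * Uᴴ := by
      nth_rewrite 1 [hspec]
      rw [← Matrix.sub_mul, ← Matrix.mul_sub, diagonal_sub]
      congr 3
      ext i
      simp
    rw [this]
    refine Matrix.PosSemidef.mul_mul_conjTranspose_same (posSemidef_diagonal_iff.2 fun i => ?_) U
    rw [Complex.zero_le_real, sub_nonneg]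
    exact Real.le_sqrt_of_sq_le (by nlinarith [hd0 i, hd1 i])

lemma neg_one_pow_val_add (a b : ZMod 2) :
    (-1 : ℂ) ^ (a + b).val = (-1) ^ a.val * (-1) ^ b.val := by
  rw [ZMod.val_add, ← neg_one_pow_eq_pow_mod_two, pow_add]

lemma conj_xVecV {n : ℕ} (x z : Fin n → ZMod 2) :
    (starRingEnd ℂ) (xVecV n x z) = xVecV n x z := by
  simp [xVecV]

lemma xVecV_add_left {n : ℕ} (x a z : Fin n → ZMod 2) :
    xVecV n (x + a) z = (-1 : ℂ) ^ (a ⬝ᵥ z).val * xVecV n x z := by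
  have : ∑ i, (x + a) i * z i = (∑ i, x i * z i) + a ⬝ᵥ z := by
    simp [dotProduct, add_mul, Finset.sum_add_distrib]
  rw [xVecV, this, neg_one_pow_val_add, xVecV]
  ring

lemma xVecV_mul_self {n : ℕ} (x z : Fin n → ZMod 2) :
    xVecV n x z * xVecV n x z = ((2 : ℂ) ^ n)⁻¹ := by
  rw [xVecV, div_mul_div_comm, ← pow_add, ← two_mul, pow_mul, neg_one_sq, one_pow,
    ← Complex.ofReal_mul, Real.mul_self_sqrt (by positivity), one_div]
  push_cast
  rfl

/-- A sum of characters over a set invariant under a shift on which they disagree vanishes. -/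
lemma sum_xVecV_mul_eq_zero {n : ℕ} {T : Finset (Fin n → ZMod 2)} {a z z' : Fin n → ZMod 2}
    (hT : ∀ x ∈ T, x + a ∈ T) (ha : a ⬝ᵥ z ≠ a ⬝ᵥ z') :
    ∑ x ∈ T, xVecV n x z * xVecV n x z' = 0 := by
  have haa : ∀ x : Fin n → ZMod 2, x + a + a = x := fun x => by
    ext i
    simp [add_assoc, CharTwo.add_self_eq_zero]
  have hsign : ∀ u v : ZMod 2, u ≠ v → (-1 : ℂ) ^ u.val * (-1) ^ v.val = -1 := by
    intro u v huv
    have : u + v = 1 := by revert u v; decide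
    rw [← neg_one_pow_val_add, this]
    simp [ZMod.val_one]
  have h : ∑ x ∈ T, xVecV n x z * xVecV n x z'
      = ∑ x ∈ T, -(xVecV n x z * xVecV n x z') := by
    refine Finset.sum_nbij' (· + a) (· + a) hT hT (fun x _ => haa x) (fun x _ => haa x) ?_
    intro x _
    rw [xVecV_add_left, xVecV_add_left]
    linear_combination (xVecV n x z * xVecV n x z') * hsign _ _ ha
  rw [Finset.sum_neg_distrib] at h
  exact self_eq_neg.1 h

/-- Completeness of the conjugate basis. -/
lemma sum_xVecV_mul {n : ℕ} (z z' : Fin n → ZMod 2) :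
    ∑ x, xVecV n x z * xVecV n x z' = if z = z' then 1 else 0 := by
  split_ifs with h
  · subst h
    simp [xVecV_mul_self]
  · obtain ⟨i, hi⟩ := Function.ne_iff.1 h
    exact sum_xVecV_mul_eq_zero (a := Pi.single i 1) (by simp) (by simpa using hi)

lemma adjLin_dotProduct {n m : ℕ} (f : (Fin n → ZMod 2) →ₗ[ZMod 2] (Fin m → ZMod 2))
    (c : Fin m → ZMod 2) (v : Fin n → ZMod 2) : adjLin f c ⬝ᵥ v = c ⬝ᵥ f v := by
  rw [adjLin, Matrix.toLin'_apply, Matrix.mulVec_transpose, ← Matrix.dotProduct_mulVec,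
    LinearMap.toMatrix'_mulVec]

/-- The projector onto a value of `g` is block diagonal with respect to `f`. -/
lemma sum_fiber_xVecV_mul_of_ne {n m ℓ : ℕ}
    {f : (Fin n → ZMod 2) →ₗ[ZMod 2] (Fin m → ZMod 2)}
    {g : (Fin n → ZMod 2) →ₗ[ZMod 2] (Fin ℓ → ZMod 2)}
    (hgf : LinearMap.range (adjLin f) ≤ LinearMap.ker g) (k : Fin ℓ → ZMod 2)
    {z z' : Fin n → ZMod 2} (h : f z ≠ f z') :
    ∑ x ∈ Finset.univ.filter (fun x => g x = k), xVecV n x z * xVecV n x z' = 0 := by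
  obtain ⟨i, hi⟩ := Function.ne_iff.1 h
  have hg : g (adjLin f (Pi.single i 1)) = 0 := hgf ⟨_, rfl⟩
  refine sum_xVecV_mul_eq_zero (a := adjLin f (Pi.single i 1)) ?_ ?_
  · intro x hx
    simpa [hg] using hx
  · simpa [adjLin_dotProduct] using hi

/-- The projector onto a value of a surjective `g` has constant diagonal. -/
lemma sum_fiber_xVecV_mul_self {n ℓ : ℕ} {g : (Fin n → ZMod 2) →ₗ[ZMod 2] (Fin ℓ → ZMod 2)}
    (hg : Function.Surjective g) (k : Fin ℓ → ZMod 2) (z : Fin n → ZMod 2) :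
    ∑ x ∈ Finset.univ.filter (fun x => g x = k), xVecV n x z * xVecV n x z
      = ((2 : ℂ) ^ ℓ)⁻¹ := by
  have hfib : ∀ k', (Finset.univ.filter (fun x => g x = k')).card
      = (Finset.univ.filter (fun x => g x = k)).card := fun k' =>
    AddMonoidHom.card_fiber_eq_of_mem_range g.toAddMonoidHom (hg k') (hg k)
  have hcard : 2 ^ ℓ * (Finset.univ.filter (fun x => g x = k)).card = 2 ^ n := by
    have h := Finset.card_eq_sum_card_fiberwise (f := g)
      (s := (Finset.univ : Finset (Fin n → ZMod 2))) (t := Finset.univ) (by simp)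
    simp only [hfib, Finset.sum_const, Finset.card_univ, Fintype.card_pi, ZMod.card,
      Finset.prod_const, Fintype.card_fin, smul_eq_mul] at h
    exact h.symm
  have hcard' : (2 : ℂ) ^ ℓ * ((Finset.univ.filter (fun x => g x = k)).card : ℂ) = 2 ^ n := by
    exact_mod_cast hcard
  simp only [xVecV_mul_self, Finset.sum_const, nsmul_eq_mul]
  rw [← hcard']
  have : ((Finset.univ.filter (fun x => g x = k)).card : ℂ) ≠ 0 := by
    intro h0
    rw [h0, mul_zero] at hcard'
    exact pow_ne_zero n two_ne_zero hcard'.symm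
  field_simp

/-- The hashed key blocks in the computational basis. -/
lemma sum_thetaRV_apply {n : ℕ} {β r : Type*} [Fintype β] [Fintype r]
    (ω : (Fin n → ZMod 2) × β × r → ℂ) (T : Finset (Fin n → ZMod 2)) (s s' : r) :
    ∑ x ∈ T, thetaRV ω x s s' = ∑ z, ∑ z', (∑ x ∈ T, xVecV n x z * xVecV n x z') *
      ∑ b, ω (z, b, s) * (starRingEnd ℂ) (ω (z', b, s')) := by
  have h : ∀ x, thetaRV ω x s s' = ∑ z, ∑ z', ∑ b, xVecV n x z * xVecV n x z' *
      (ω (z, b, s) * (starRingEnd ℂ) (ω (z', b, s'))) := by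
    intro x
    simp only [thetaRV, condVecXV, of_apply, map_sum, map_mul, conj_xVecV,
      Finset.sum_mul_sum]
    rw [Finset.sum_comm]
    refine Finset.sum_congr rfl fun z _ => ?_
    rw [Finset.sum_comm]
    refine Finset.sum_congr rfl fun z' _ => Finset.sum_congr rfl fun b _ => ?_
    ring
  simp only [h]
  rw [Finset.sum_comm]
  refine Finset.sum_congr rfl fun z _ => ?_
  rw [Finset.sum_comm]
  refine Finset.sum_congr rfl fun z' _ => ?_
  rw [Finset.sum_mul]
  exact Finset.sum_congr rfl fun x _ => (Finset.mul_sum _ _ _).symm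

/-- A purification of the key state, as a matrix from the purifying system. -/
noncomputable def keyPurification {n ℓ : ℕ} {β r : Type*} [Fintype β] [Fintype r]
    (g : (Fin n → ZMod 2) →ₗ[ZMod 2] (Fin ℓ → ZMod 2))
    (ω : (Fin n → ZMod 2) × β × r → ℂ) :
    Matrix ((Fin ℓ → ZMod 2) × r) ((Fin n → ZMod 2) × β) ℂ :=
  Matrix.of fun p q => if g q.1 = p.1 then condVecXV ω q.1 (q.2, p.2) else 0

lemma keyPurification_sub {n ℓ : ℕ} {β r : Type*} [Fintype β] [Fintype r]
    (g : (Fin n → ZMod 2) →ₗ[ZMod 2] (Fin ℓ → ZMod 2))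
    (ω φ : (Fin n → ZMod 2) × β × r → ℂ) :
    keyPurification g (ω - φ) = keyPurification g ω - keyPurification g φ := by
  ext p q
  simp only [keyPurification, of_apply, Matrix.sub_apply, condVecXV, Pi.sub_apply, mul_sub,
    Finset.sum_sub_distrib]
  split_ifs <;> simp

lemma keyPurification_mul_conjTranspose {n ℓ : ℕ} {β r : Type*} [Fintype β] [Fintype r]
    (g : (Fin n → ZMod 2) →ₗ[ZMod 2] (Fin ℓ → ZMod 2))
    (ω : (Fin n → ZMod 2) × β × r → ℂ) :
    keyPurification g ω * (keyPurification g ω)ᴴ = keyState ω g := by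
  ext p q
  rw [Matrix.mul_apply, Fintype.sum_prod_type]
  simp only [keyPurification, keyState, of_apply, conjTranspose_apply, thetaRV]
  split_ifs with h
  · rw [Finset.sum_filter]
    refine Finset.sum_congr rfl fun x _ => ?_
    rw [← h]
    split_ifs <;> simp
  · refine Finset.sum_eq_zero fun x _ => Finset.sum_eq_zero fun b _ => ?_
    by_cases h1 : g x = p.1
    · simp [← h1, show ¬ g x = q.1 from fun h2 => h (h1.symm.trans h2)]
    · simp [h1]

lemma trace_keyState {n ℓ : ℕ} {β r : Type*} [Fintype β] [Fintype r]
    (g : (Fin n → ZMod 2) →ₗ[ZMod 2] (Fin ℓ → ZMod 2))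
    (ω : (Fin n → ZMod 2) × β × r → ℂ) :
    (keyState ω g).trace.re = ∑ t, ‖ω t‖ ^ 2 := by
  have h : (keyState ω g).trace = ∑ s, ∑ x, thetaRV ω x s s := by
    simp only [Matrix.trace, Matrix.diag, keyState, of_apply, if_true, Fintype.sum_prod_type]
    rw [Finset.sum_comm]
    refine Finset.sum_congr rfl fun s _ => ?_
    exact Finset.sum_fiberwise _ _ _
  rw [h]
  simp only [sum_thetaRV_apply, sum_xVecV_mul, ite_mul, one_mul, zero_mul, Finset.sum_ite_eq,
    Finset.mem_univ, if_true, Complex.mul_conj, Complex.normSq_eq_norm_sq]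
  rw [Finset.sum_comm, Fintype.sum_prod_type, Complex.re_sum]
  refine Finset.sum_congr rfl fun z _ => ?_
  rw [Finset.sum_comm, Fintype.sum_prod_type, Complex.re_sum]
  refine Finset.sum_congr rfl fun b _ => ?_
  rw [Complex.re_sum]
  simp only [Complex.ofReal_re]

/-- Continuity of the key state in the underlying pure state. -/
lemma traceNorm_keyState_sub_le {n ℓ : ℕ} {β r : Type*} [Fintype β] [Fintype r] [DecidableEq r]
    (g : (Fin n → ZMod 2) →ₗ[ZMod 2] (Fin ℓ → ZMod 2))
    {ω φ : (Fin n → ZMod 2) × β × r → ℂ} (hω : ∑ t, ‖ω t‖ ^ 2 = 1) (hφ : ∑ t, ‖φ t‖ ^ 2 = 1) :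
    traceNorm (keyState ω g - keyState φ g) ≤ 2 * √(∑ t, ‖(ω - φ) t‖ ^ 2) := by
  have h := traceNorm_mul_conjTranspose_sub_le (keyPurification g ω) (keyPurification g φ)
  rw [← keyPurification_sub] at h
  simp only [keyPurification_mul_conjTranspose, trace_keyState, hω, hφ, Real.sqrt_one] at h
  linarith

/-- The state after a `z`-controlled coherent measurement of `B` with Kraus operators `S z c`. -/
noncomputable def coherentMeasurement {α β r : Type*} [Fintype β]
    (S : α → α → Matrix β β ℂ) (ψ : α × β × r → ℂ) : α × (α × β) × r → ℂ :=
  fun t => (S t.1 t.2.1.1 *ᵥ fun b => ψ (t.1, b, t.2.2)) t.2.1.2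

/-- The state after coherently copying the computational basis of `A`. -/
noncomputable def coherentCopy {α β r : Type*} (ψ : α × β × r → ℂ) : α × (α × β) × r → ℂ :=
  fun t => if t.1 = t.2.1.1 then ψ (t.1, t.2.1.2, t.2.2) else 0

lemma sum_mulVec_mul_conj {α β : Type*} [Fintype α] [Fintype β] [DecidableEq β]
    {S : α → Matrix β β ℂ} (hS : ∑ c, (S c)ᴴ * S c = 1) (u v : β → ℂ) :
    ∑ c, ∑ b, (S c *ᵥ u) b * (starRingEnd ℂ) ((S c *ᵥ v) b)
      = ∑ b, u b * (starRingEnd ℂ) (v b) := by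
  have h : ∀ c, ∑ b, (S c *ᵥ u) b * (starRingEnd ℂ) ((S c *ᵥ v) b)
      = star v ⬝ᵥ (((S c)ᴴ * S c) *ᵥ u) := by
    intro c
    rw [← Matrix.mulVec_mulVec, Matrix.dotProduct_mulVec, ← Matrix.star_mulVec]
    exact Finset.sum_congr rfl fun b _ => mul_comm _ _
  simp only [h]
  rw [← dotProduct_sum, ← Matrix.sum_mulVec, hS, Matrix.one_mulVec]
  exact Finset.sum_congr rfl fun b _ => mul_comm _ _

lemma sum_norm_sq_coherentMeasurement {α β r : Type*} [Fintype α] [Fintype β] [DecidableEq β]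
    [Fintype r] {S : α → α → Matrix β β ℂ} (hS : ∀ z, ∑ c, (S z c)ᴴ * S z c = 1)
    (ψ : α × β × r → ℂ) :
    ∑ t, ‖coherentMeasurement S ψ t‖ ^ 2 = ∑ t, ‖ψ t‖ ^ 2 := by
  simp only [Fintype.sum_prod_type]
  refine Finset.sum_congr rfl fun z _ => ?_
  rw [← Fintype.sum_prod_type' fun c b => ∑ s, ‖coherentMeasurement S ψ (z, (c, b), s)‖ ^ 2,
    Finset.sum_comm, Finset.sum_comm (s := (Finset.univ : Finset β))]
  refine Finset.sum_congr rfl fun s _ => ?_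
  rw [Fintype.sum_prod_type]
  have h := sum_mulVec_mul_conj (hS z) (fun b => ψ (z, b, s)) (fun b => ψ (z, b, s))
  simp only [Complex.mul_conj, Complex.normSq_eq_norm_sq] at h
  exact_mod_cast h

lemma sum_norm_sq_coherentCopy {α β r : Type*} [Fintype α] [Fintype β] [Fintype r]
    (ψ : α × β × r → ℂ) : ∑ t, ‖coherentCopy ψ t‖ ^ 2 = ∑ t, ‖ψ t‖ ^ 2 := by
  simp only [Fintype.sum_prod_type, coherentCopy]
  refine Finset.sum_congr rfl fun z _ => ?_
  rw [Finset.sum_eq_single z] <;> simp +contextual [eq_comm]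

/-- A measurement of `B` controlled by `f z` does not disturb the hashed key. -/
lemma keyState_coherentMeasurement {n m ℓ : ℕ} {β r : Type*} [Fintype β] [DecidableEq β]
    [Fintype r] {f : (Fin n → ZMod 2) →ₗ[ZMod 2] (Fin m → ZMod 2)}
    {g : (Fin n → ZMod 2) →ₗ[ZMod 2] (Fin ℓ → ZMod 2)}
    (hgf : LinearMap.range (adjLin f) ≤ LinearMap.ker g)
    {S : (Fin m → ZMod 2) → (Fin n → ZMod 2) → Matrix β β ℂ}
    (hS : ∀ c, ∑ z, (S c z)ᴴ * S c z = 1) (ψ : (Fin n → ZMod 2) × β × r → ℂ) :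
    keyState (coherentMeasurement (fun z => S (f z)) ψ) g = keyState ψ g := by
  ext p q
  simp only [keyState, of_apply, sum_thetaRV_apply]
  split_ifs
  · refine Finset.sum_congr rfl fun z _ => Finset.sum_congr rfl fun z' _ => ?_
    by_cases h : f z = f z'
    · rw [Fintype.sum_prod_type]
      simp only [coherentMeasurement, h]
      rw [sum_mulVec_mul_conj (hS (f z'))]
    · rw [sum_fiber_xVecV_mul_of_ne hgf p.1 h, zero_mul, zero_mul]
  · rfl

/-- After copying the computational basis the hashed key is ideal. -/
lemma keyState_coherentCopy {n ℓ : ℕ} {β r : Type*} [Fintype β] [Fintype r]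
    {g : (Fin n → ZMod 2) →ₗ[ZMod 2] (Fin ℓ → ZMod 2)} (hg : Function.Surjective g)
    (ψ : (Fin n → ZMod 2) × β × r → ℂ) :
    keyState (coherentCopy ψ) g = idealKeyV ℓ ψ := by
  ext p q
  simp only [keyState, idealKeyV, reducedR, of_apply, sum_thetaRV_apply]
  split_ifs
  · rw [Finset.mul_sum]
    refine Finset.sum_congr rfl fun z _ => ?_
    rw [Finset.sum_eq_single z, sum_fiber_xVecV_mul_self hg]
    · congr 1
      rw [Fintype.sum_prod_type, Finset.sum_eq_single z] <;>
        simp +contextual [coherentCopy, eq_comm]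
    · intro z' _ hz
      refine mul_eq_zero_of_right _ (Finset.sum_eq_zero fun b _ => ?_)
      by_cases h : z = b.1
      · have : z' ≠ b.1 := fun h' => hz (h'.trans h.symm)
        simp [coherentCopy, this]
      · simp [coherentCopy, h]
    · simp
  · simp

lemma norm_sub_sq_complex (a b : ℂ) :
    ‖a - b‖ ^ 2 = ‖a‖ ^ 2 + ‖b‖ ^ 2 - 2 * ((starRingEnd ℂ) b * a).re := by
  rw [← Complex.normSq_eq_norm_sq, Complex.normSq_sub, Complex.normSq_eq_norm_sq,
    Complex.normSq_eq_norm_sq, mul_comm ((starRingEnd ℂ) b)]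

/-- Reliable guessing makes the coherent measurement act as a coherent copy. -/
lemma sum_norm_sq_coherentMeasurement_sub_le {α β r : Type*} [Fintype α] [Fintype β]
    [DecidableEq β] [Fintype r] {S M : α → α → Matrix β β ℂ}
    (hS : ∀ z, ∑ c, (S z c)ᴴ * S z c = 1) (hSM : ∀ z c, (S z c - M z c).PosSemidef)
    {ψ : α × β × r → ℂ} (hψ : ∑ t, ‖ψ t‖ ^ 2 = 1) {ε : ℝ}
    (hM : 1 - ε ≤ (∑ z, ∑ b, ∑ b', ∑ s,
      (starRingEnd ℂ) (ψ (z, b, s)) * M z z b b' * ψ (z, b', s)).re) :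
    ∑ t, ‖(coherentMeasurement S ψ - coherentCopy ψ) t‖ ^ 2 ≤ 2 * ε := by
  have hquad : ∀ N : α → Matrix β β ℂ, ∑ z, ∑ b, ∑ b', ∑ s,
      (starRingEnd ℂ) (ψ (z, b, s)) * N z b b' * ψ (z, b', s)
      = ∑ z, ∑ s, star (fun b => ψ (z, b, s)) ⬝ᵥ (N z *ᵥ fun b => ψ (z, b, s)) := by
    intro N
    refine Finset.sum_congr rfl fun z _ => ?_
    simp only [dotProduct, mulVec, Finset.mul_sum, Pi.star_apply, starRingEnd_apply, mul_assoc]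
    rw [Finset.sum_comm (γ := r)]
    exact Finset.sum_congr rfl fun b _ => Finset.sum_comm
  have hcross : ∑ t, (starRingEnd ℂ) (coherentCopy ψ t) * coherentMeasurement S ψ t
      = ∑ z, ∑ s, star (fun b => ψ (z, b, s)) ⬝ᵥ (S z z *ᵥ fun b => ψ (z, b, s)) := by
    simp only [Fintype.sum_prod_type]
    refine Finset.sum_congr rfl fun z _ => ?_
    rw [Finset.sum_eq_single z]
    · rw [Finset.sum_comm]
      simp [coherentCopy, coherentMeasurement, dotProduct]
    · intro c _ hc
      simp [coherentCopy, hc.symm]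
    · simp
  have hle : 1 - ε ≤ (∑ t, (starRingEnd ℂ) (coherentCopy ψ t) *
      coherentMeasurement S ψ t).re := by
    refine hM.trans ?_
    rw [hquad fun z => M z z, hcross]
    simp only [Complex.re_sum]
    refine Finset.sum_le_sum fun z _ => Finset.sum_le_sum fun s _ => ?_
    have h := (Complex.le_def.1 ((hSM z z).dotProduct_mulVec_nonneg fun b => ψ (z, b, s))).1
    rw [Matrix.sub_mulVec, dotProduct_sub, Complex.sub_re, Complex.zero_re] at h
    linarith
  simp only [Pi.sub_apply, norm_sub_sq_complex, Finset.sum_sub_distrib, Finset.sum_add_distrib,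
    sum_norm_sq_coherentMeasurement hS, sum_norm_sq_coherentCopy, hψ, ← Finset.mul_sum,
    ← Complex.re_sum]
  linarith

/-- If the Z-measurement outcome z is ε-recoverable from B together with the
compressed value f(z) (f a surjective linear map to m bits), then for every surjective linear
map g to n−m bits with ker g = range fᵀ, the hashed X-key of n−m bits is √(2ε)-secure
against R. -/
theorem csi_implies_pa {n m : ℕ} (hn : 1 ≤ n) (hm : m ≤ n)
    {β r : Type*} [Fintype β] [DecidableEq β] [Fintype r] [DecidableEq r]
    (ψ : (Fin n → ZMod 2) × β × r → ℂ) (hψ : ∑ t, ‖ψ t‖ ^ 2 = 1)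
    (f : ((Fin n → ZMod 2)) →ₗ[ZMod 2] (Fin m → ZMod 2)) (hf : Function.Surjective f)
    (ε : ℝ) (hε0 : 0 ≤ ε) (hε1 : ε ≤ 1)
    (Λ : (Fin m → ZMod 2) → (Fin n → ZMod 2) → Matrix β β ℂ)
    (hΛpos : ∀ c z, (Λ c z).PosSemidef) (hΛsum : ∀ c, ∑ z, Λ c z = 1)
    (hguess : 1 - ε ≤ (∑ z, ∑ b, ∑ b', ∑ s,
        (starRingEnd ℂ) (ψ (z, b, s)) * Λ (f z) z b b' * ψ (z, b', s)).re) :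
    ∀ g : ((Fin n → ZMod 2)) →ₗ[ZMod 2] (Fin (n - m) → ZMod 2),
      Function.Surjective g → LinearMap.ker g = LinearMap.range (adjLin f) →
      traceDist (keyState ψ g) (idealKeyV (n - m) ψ) ≤ Real.sqrt (2 * ε) := by
  intro g hg hker
  have hΛle : ∀ c z, (1 - Λ c z).PosSemidef := by
    intro c z
    rw [← hΛsum c, ← Finset.sum_erase_eq_sub (Finset.mem_univ z)]
    exact Matrix.posSemidef_sum _ fun z' _ => hΛpos c z'
  choose S hSsq hSge using fun c z => exists_sqrt_ge (hΛpos c z) (hΛle c z)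
  have hS : ∀ c, ∑ z, (S c z)ᴴ * S c z = 1 := fun c => by simp only [hSsq, hΛsum]
  have hdist := sum_norm_sq_coherentMeasurement_sub_le (S := fun z => S (f z))
    (M := fun z => Λ (f z)) (fun z => hS (f z)) (fun z => hSge (f z)) hψ hguess
  have hnorm := traceNorm_keyState_sub_le g
    ((sum_norm_sq_coherentMeasurement (fun z => hS (f z)) ψ).trans hψ)
    ((sum_norm_sq_coherentCopy ψ).trans hψ)
  rw [keyState_coherentMeasurement hker.ge hS, keyState_coherentCopy hg] at hnorm
  have hsqrt := Real.sqrt_le_sqrt hdist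
  rw [traceDist]
  linarith
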